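/- arXiv:2002.08824 — 2 statements merged into one kernel-verified Lean document; each statement's English description precedes it below -/
import Mathlib

section
/- Let M be a matroid of rank n−k on a ground set E of cardinality n. If a chain S = (σ_1 ⊊ σ_2 ⊊ ⋯ ⊊ σ_k) ∈ Σ achieves the lexicographic minimum, i.e. e(S) = (e_1,…,e_k), then σ_i ∈ N_i for every 1 ≤ i ≤ k. -/
open Finset

/-- A matroid on ground set `Fin n`, given by its rank function. -/
structure MatroidRk (n : ℕ) where
  r : Finset (Fin n) → ℕ
  r_le_card : ∀ X, r X ≤ X.card
  r_mono : ∀ ⦃X Y : Finset (Fin n)⦄, X ⊆ Y → r X ≤ r Y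
  r_submod : ∀ X Y, r (X ∩ Y) + r (X ∪ Y) ≤ r X + r Y

namespace MatroidRk

variable {n : ℕ}

/-- The nullity function `n(X) = |X| - r(X)`. -/
def nul (M : MatroidRk n) (X : Finset (Fin n)) : ℕ := X.card - M.r X

/-- `X ∈ N_i`: `X` is inclusion-minimal among the subsets of nullity `i`. -/
def Nmin (M : MatroidRk n) (i : ℕ) (X : Finset (Fin n)) : Prop :=
  M.nul X = i ∧ ∀ Y ⊆ X, M.nul Y = i → Y = X

/-- Membership in `Σ`: a chain `σ₁ ⊊ ⋯ ⊊ σ_k` with `σ_i ∈ 𝒩_i`. -/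
def SigmaChain (M : MatroidRk n) (k : ℕ) (σ : Fin k → Finset (Fin n)) : Prop :=
  StrictMono σ ∧ ∀ i : Fin k, M.nul (σ i) = (i : ℕ) + 1

/-- Membership in `Σ'`: a chain `σ₁ ⊊ ⋯ ⊊ σ_k` with `σ_i ∈ N_i`. -/
def SigmaChain' (M : MatroidRk n) (k : ℕ) (σ : Fin k → Finset (Fin n)) : Prop :=
  StrictMono σ ∧ ∀ i : Fin k, M.Nmin ((i : ℕ) + 1) (σ i)

/-- The set `{e(S) : S ∈ Σ}` of tuples of cardinalities of chains in `Σ`. -/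
def eSet (M : MatroidRk n) (k : ℕ) : Set (Fin k → ℕ) :=
  {u | ∃ σ : Fin k → Finset (Fin n), M.SigmaChain k σ ∧ ∀ i, (σ i).card = u i}

/-- The set `{e(S) : S ∈ Σ'}`. -/
def eSet' (M : MatroidRk n) (k : ℕ) : Set (Fin k → ℕ) :=
  {u | ∃ σ : Fin k → Finset (Fin n), M.SigmaChain' k σ ∧ ∀ i, (σ i).card = u i}

/-- The generalized Hamming weight `d_i = min {|σ| : σ ∈ 𝒩_i}`. -/
noncomputable def dW (M : MatroidRk n) (i : ℕ) : ℕ :=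
  sInf {c | ∃ X, M.nul X = i ∧ X.card = c}

end MatroidRk

/-- `w` is the lexicographically smallest element of `A`. -/
def IsLexMin {k : ℕ} (A : Set (Fin k → ℕ)) (w : Fin k → ℕ) : Prop :=
  w ∈ A ∧ ∀ u ∈ A, toLex w ≤ toLex u

/-- `w` is the reverse-lexicographically smallest element of `A`. -/
def IsRevLexMin {k : ℕ} (A : Set (Fin k → ℕ)) (w : Fin k → ℕ) : Prop :=
  w ∈ A ∧ ∀ u ∈ A, toLex (w ∘ Fin.rev) ≤ toLex (u ∘ Fin.rev)

/-!
Nullity is supermodular. Hence if `Y ⊆ σ_i` has the same nullity as `σ_i`, then intersecting each of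
`σ_1, …, σ_i` with `Y` preserves all their nullities, and the result is again a chain in `Σ`. Its
cardinalities are nowhere larger than those of `σ`, and the `i`-th one is `|Y|`, so a chain whose
cardinalities are minimal in the product order must have `Y = σ_i`. A lexicographic minimum is in
particular minimal in the product order.
-/

theorem IsLexMin.minimal {k : ℕ} {A : Set (Fin k → ℕ)} {w : Fin k → ℕ} (hw : IsLexMin A w) :
    Minimal (· ∈ A) w :=
  ⟨hw.1, fun u hu huw =>
    (toLex.injective ((hw.2 u hu).antisymm (Pi.toLex_monotone huw))).le⟩

section MeetUpTo

variable {ι α : Type*} [Preorder ι] [DecidableLE ι] [SemilatticeInf α] {σ : ι → α}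

/-- The family obtained from `σ` by meeting the members with index at most `i` with `y`. It is the
exchange that lowers a chain at `i` without touching the members above `i`. -/
def meetUpTo (σ : ι → α) (i : ι) (y : α) (l : ι) : α :=
  if l ≤ i then σ l ⊓ y else σ l

theorem meetUpTo_of_le {i l : ι} (hl : l ≤ i) (y : α) : meetUpTo σ i y l = σ l ⊓ y :=
  if_pos hl

theorem meetUpTo_of_not_le {i l : ι} (hl : ¬ l ≤ i) (y : α) : meetUpTo σ i y l = σ l :=
  if_neg hl

theorem meetUpTo_self_of_le {i : ι} {y : α} (hy : y ≤ σ i) : meetUpTo σ i y i = y :=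
  (meetUpTo_of_le le_rfl y).trans (inf_eq_right.2 hy)

theorem meetUpTo_le (σ : ι → α) (i : ι) (y : α) : meetUpTo σ i y ≤ σ := fun l => by
  by_cases hl : l ≤ i
  · exact (meetUpTo_of_le hl y).trans_le inf_le_left
  · exact (meetUpTo_of_not_le hl y).le

theorem monotone_meetUpTo (hσ : Monotone σ) (i : ι) (y : α) : Monotone (meetUpTo σ i y) := by
  intro a b hab
  by_cases hb : b ≤ i
  · rw [meetUpTo_of_le (hab.trans hb), meetUpTo_of_le hb]
    exact inf_le_inf_right y (hσ hab)
  · rw [meetUpTo_of_not_le hb]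
    exact (meetUpTo_le σ i y a).trans (hσ hab)

end MeetUpTo

namespace MatroidRk

variable {n k : ℕ} (M : MatroidRk n)

theorem nul_add_r (X : Finset (Fin n)) : M.nul X + M.r X = #X :=
  Nat.sub_add_cancel (M.r_le_card X)

theorem nul_empty : M.nul ∅ = 0 := by
  simp [nul]

theorem nul_add_nul_le_nul_inter_add_nul_union (X Y : Finset (Fin n)) :
    M.nul X + M.nul Y ≤ M.nul (X ∩ Y) + M.nul (X ∪ Y) := by
  linarith [M.r_submod X Y, card_inter_add_card_union X Y, M.nul_add_r X, M.nul_add_r Y,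
    M.nul_add_r (X ∩ Y), M.nul_add_r (X ∪ Y)]

theorem nul_mono : Monotone M.nul := fun X Y hXY =>
  calc
    M.nul X ≤ M.nul X + M.nul (Y \ X) := Nat.le_add_right _ _
    _ ≤ M.nul (X ∩ (Y \ X)) + M.nul (X ∪ Y \ X) :=
      M.nul_add_nul_le_nul_inter_add_nul_union X (Y \ X)
    _ = M.nul Y := by
      rw [inter_sdiff_self, union_sdiff_of_subset hXY, nul_empty, zero_add]

variable {M} {X Y Z : Finset (Fin n)}

theorem nul_inter_eq_of_subset (hX : X ⊆ Z) (hY : Y ⊆ Z) (hnul : M.nul Y = M.nul Z) :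
    M.nul (X ∩ Y) = M.nul X := by
  refine (M.nul_mono inter_subset_left).antisymm ?_
  have hunion : M.nul (X ∪ Y) ≤ M.nul Y := hnul ▸ M.nul_mono (union_subset hX hY)
  linarith [M.nul_add_nul_le_nul_inter_add_nul_union X Y]

theorem nul_meetUpTo {ι : Type*} [Preorder ι] [DecidableLE ι] {σ : ι → Finset (Fin n)}
    (hσ : Monotone σ) {i : ι} (hY : Y ⊆ σ i) (hnul : M.nul Y = M.nul (σ i)) (l : ι) :
    M.nul (meetUpTo σ i Y l) = M.nul (σ l) := by
  by_cases hl : l ≤ i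
  · rw [meetUpTo_of_le hl]
    exact nul_inter_eq_of_subset (hσ hl) hY hnul
  · rw [meetUpTo_of_not_le hl]

theorem SigmaChain.of_monotone {σ : Fin k → Finset (Fin n)} (hσ : Monotone σ)
    (hnul : ∀ i : Fin k, M.nul (σ i) = (i : ℕ) + 1) : M.SigmaChain k σ :=
  have hinj : Function.Injective σ := fun a b hab => by
    have hval : (a : ℕ) + 1 = b + 1 := by rw [← hnul a, ← hnul b, hab]
    exact Fin.ext (Nat.succ_injective hval)
  ⟨hσ.strictMono_of_injective hinj, hnul⟩

theorem SigmaChain.meetUpTo {σ : Fin k → Finset (Fin n)} (hσ : M.SigmaChain k σ) {i : Fin k}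
    (hY : Y ⊆ σ i) (hnul : M.nul Y = M.nul (σ i)) : M.SigmaChain k (meetUpTo σ i Y) :=
  .of_monotone (monotone_meetUpTo hσ.1.monotone i Y) fun l =>
    (nul_meetUpTo hσ.1.monotone hY hnul l).trans (hσ.2 l)

end MatroidRk

theorem statement3_general {n k : ℕ} (M : MatroidRk n) (σ : Fin k → Finset (Fin n))
    (hσ : M.SigmaChain k σ) (hmin : Minimal (· ∈ M.eSet k) (fun i => #(σ i))) (i : Fin k) :
    M.Nmin ((i : ℕ) + 1) (σ i) := by
  refine ⟨hσ.2 i, fun Y hY hnul => eq_of_subset_of_card_le hY ?_⟩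
  have hchain : M.SigmaChain k (meetUpTo σ i Y) := hσ.meetUpTo hY (hnul.trans (hσ.2 i).symm)
  have hle : (fun l => #(meetUpTo σ i Y l)) ≤ fun l => #(σ l) := fun l =>
    card_le_card (meetUpTo_le σ i Y l)
  calc
    #(σ i) ≤ #(meetUpTo σ i Y i) := hmin.le_of_le ⟨_, hchain, fun _ => rfl⟩ hle i
    _ = #Y := by rw [meetUpTo_self_of_le hY]

open MatroidRk in
/-- if a chain `S ∈ Σ` achieves the lexicographic minimum, i.e.
`e(S) = (e_1,…,e_k)`, then each `σ_i` lies in `N_i`. -/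
theorem statement3 {n k : ℕ} (M : MatroidRk n) (hrk : M.r Finset.univ + k = n)
    (σ : Fin k → Finset (Fin n)) (hσ : M.SigmaChain k σ)
    (hmin : IsLexMin (M.eSet k) (fun i => (σ i).card)) :
    ∀ i : Fin k, M.Nmin ((i : ℕ) + 1) (σ i) :=
  statement3_general M σ hσ hmin.minimal
end

section
/- Let C be an [n,k] linear code over F_q, 1 ≤ i ≤ k, and let D ⊆ C be a top-down greedy i-subcode. Then n(Supp(D)) = i, i.e. Supp(D) ∈ 𝒩_i for the matroid M_C. -/
open Finset
open scoped Classical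

noncomputable section

/-- The rank in the matroid `M_C`: `r(X)` is the rank of the column submatrix `H_X`. -/
def colRank {F : Type*} [Field F] {m n : ℕ} (H : Matrix (Fin m) (Fin n) F)
    (X : Finset (Fin n)) : ℕ :=
  Module.finrank F (Submodule.span F ((fun j i => H i j) '' (X : Set (Fin n))))

/-- The nullity function of the matroid `M_C`: `n(X) = |X| - r(X)`. -/
def nulC {F : Type*} [Field F] {m n : ℕ} (H : Matrix (Fin m) (Fin n) F)
    (X : Finset (Fin n)) : ℕ :=
  X.card - colRank H X

/-- The support of a word. -/
def supp {F : Type*} [Field F] {n : ℕ} (c : Fin n → F) : Finset (Fin n) :=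
  Finset.univ.filter (fun i => c i ≠ 0)

/-- The support of a subcode. -/
def suppD {F : Type*} [Field F] {n : ℕ} (D : Submodule F (Fin n → F)) : Finset (Fin n) :=
  Finset.univ.filter (fun i => ∃ c ∈ D, c i ≠ 0)

/-- The weight of a subcode: the cardinality of its support. -/
def wt {F : Type*} [Field F] {n : ℕ} (D : Submodule F (Fin n → F)) : ℕ := (suppD D).card

/-- The subcode `C(X) = {c ∈ C : Supp(c) ⊆ X}`. -/
def codeRestrict {F : Type*} [Field F] {n : ℕ} (C : Submodule F (Fin n → F))
    (X : Finset (Fin n)) : Submodule F (Fin n → F) where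
  carrier := {c | c ∈ C ∧ ∀ i ∉ X, c i = 0}
  add_mem' := by
    rintro a b ⟨ha, ha0⟩ ⟨hb, hb0⟩
    exact ⟨C.add_mem ha hb, fun i hi => by simp [Pi.add_apply, ha0 i hi, hb0 i hi]⟩
  zero_mem' := ⟨C.zero_mem, fun i _ => rfl⟩
  smul_mem' := by
    rintro r a ⟨ha, ha0⟩
    exact ⟨C.smul_mem r ha, fun i hi => by simp [Pi.smul_apply, ha0 i hi]⟩

/-- The code defined by the parity check matrix `H`: `C = {x : H x = 0}`. -/
def codeOf {F : Type*} [Field F] {m n : ℕ} (H : Matrix (Fin m) (Fin n) F) :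
    Submodule F (Fin n → F) :=
  LinearMap.ker H.mulVecLin

/-- The `r`-th generalized Hamming weight of a code `C`. -/
def dC {F : Type*} [Field F] {n : ℕ} (C : Submodule F (Fin n → F)) (r : ℕ) : ℕ :=
  sInf {w | ∃ D : Submodule F (Fin n → F), D ≤ C ∧ Module.finrank F D = r ∧ wt D = w}

/-- `D` computes `d_r(C)`: `D ⊆ C`, `dim D = r` and `wt(D) = d_r(C)`. -/
def Computes {F : Type*} [Field F] {n : ℕ} (C : Submodule F (Fin n → F)) (r : ℕ)
    (D : Submodule F (Fin n → F)) : Prop :=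
  D ≤ C ∧ Module.finrank F D = r ∧ wt D = dC C r

end
noncomputable section

/-- `TDG C k j` is the set of top-down greedy `(k-j)`-subcodes of an `[n,k]` code `C`:
`TDG C k 0 = {C}`, and a top-down greedy `r`-subcode (`r = k-(j+1)`) is an `r`-dimensional
subcode contained in some top-down greedy `(r+1)`-subcode, of minimal weight among all such. -/
def TDG {F : Type*} [Field F] {n : ℕ} (C : Submodule F (Fin n → F)) (k : ℕ) :
    ℕ → Set (Submodule F (Fin n → F))
  | 0 => {C}
  | (j+1) => {D | (∃ D' ∈ TDG C k j, D ≤ D') ∧ Module.finrank F D = k - (j+1) ∧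
      ∀ D₂ : Submodule F (Fin n → F), (∃ D₂' ∈ TDG C k j, D₂ ≤ D₂') →
        Module.finrank F D₂ = k - (j+1) → wt D ≤ wt D₂}

/-!
By rank-nullity, `n(X) = dim C(X)`, so it suffices that a top-down greedy subcode `D` equals
`C(Supp D)`. This closedness passes down the greedy chain: if `D' = C(Supp D')` and `D ⊆ D'` has
codimension one, then `D ⊆ C(Supp D) ⊆ D'`, so failure for `D` would force `C(Supp D) = D'`, i.e.
`Supp D = Supp D'`. But shortening `D'` at a coordinate of its support gives a subcode of
codimension one with strictly smaller support, against the minimality of `wt D`.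
-/

theorem finrank_map_add_finrank_inf_ker {K V W : Type*} [DivisionRing K]
    [AddCommGroup V] [Module K V] [AddCommGroup W] [Module K W] (f : V →ₗ[K] W)
    (p : Submodule K V) [FiniteDimensional K p] :
    Module.finrank K (p.map f) + Module.finrank K (p ⊓ LinearMap.ker f : Submodule K V) =
      Module.finrank K p := by
  rw [← LinearMap.finrank_range_add_finrank_ker (f.domRestrict p), LinearMap.range_domRestrict,
    LinearMap.ker_domRestrict, ← Submodule.map_comap_subtype, Submodule.finrank_map_subtype_eq]

section Supports

variable {F : Type*} [Field F] {n : ℕ} {C D : Submodule F (Fin n → F)} {X Y : Finset (Fin n)}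

theorem mem_suppD {p : Fin n} : p ∈ suppD D ↔ ∃ c ∈ D, c p ≠ 0 := by
  simp [suppD]

theorem mem_codeRestrict {c : Fin n → F} :
    c ∈ codeRestrict C X ↔ c ∈ C ∧ ∀ p ∉ X, c p = 0 :=
  Iff.rfl

theorem le_codeRestrict_iff : D ≤ codeRestrict C X ↔ D ≤ C ∧ suppD D ⊆ X := by
  constructor
  · intro h
    refine ⟨fun c hc => (h hc).1, fun p hp => ?_⟩
    obtain ⟨c, hc, hcp⟩ := mem_suppD.mp hp
    exact not_imp_comm.mp ((h hc).2 p) hcp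
  · rintro ⟨hDC, hsupp⟩ c hc
    refine ⟨hDC hc, fun p hp => ?_⟩
    exact not_imp_comm.mp (fun hcp => hsupp (mem_suppD.mpr ⟨c, hc, hcp⟩)) hp

theorem codeRestrict_le : codeRestrict C X ≤ C :=
  (le_codeRestrict_iff.mp le_rfl).1

theorem suppD_codeRestrict_subset : suppD (codeRestrict C X) ⊆ X :=
  (le_codeRestrict_iff.mp le_rfl).2

theorem le_codeRestrict_suppD (h : D ≤ C) : D ≤ codeRestrict C (suppD D) :=
  le_codeRestrict_iff.mpr ⟨h, Subset.rfl⟩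

theorem codeRestrict_mono (h : X ⊆ Y) : codeRestrict C X ≤ codeRestrict C Y :=
  le_codeRestrict_iff.mpr ⟨codeRestrict_le, suppD_codeRestrict_subset.trans h⟩

theorem suppD_mono (h : D ≤ C) : suppD D ⊆ suppD C :=
  (le_codeRestrict_iff.mp (h.trans (le_codeRestrict_suppD le_rfl))).2

theorem codeRestrict_suppD_self : codeRestrict C (suppD C) = C :=
  codeRestrict_le.antisymm (le_codeRestrict_suppD le_rfl)

theorem suppD_nonempty (hD : D ≠ ⊥) : (suppD D).Nonempty := by
  obtain ⟨c, hcD, hc⟩ := Submodule.exists_mem_ne_zero_of_ne_bot hD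
  obtain ⟨p, hp⟩ := Function.ne_iff.mp hc
  exact ⟨p, mem_suppD.mpr ⟨c, hcD, hp⟩⟩

end Supports

section Nullity

variable {F : Type*} [Field F] {m n : ℕ} (H : Matrix (Fin m) (Fin n) F)

theorem codeRestrict_eq_spanSubset_inf (C : Submodule F (Fin n → F)) (X : Finset (Fin n)) :
    codeRestrict C X = Pi.spanSubset F (X : Set (Fin n)) ⊓ C := by
  ext c
  simp only [mem_codeRestrict, Submodule.mem_inf, Pi.mem_spanSubset_iff, Finset.mem_coe, and_comm]

theorem colRank_eq_finrank_map_spanSubset (X : Finset (Fin n)) :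
    colRank H X =
      Module.finrank F ((Pi.spanSubset F (X : Set (Fin n))).map H.mulVecLin) := by
  have mulVec_basis : ⇑H.mulVecLin ∘ ⇑(Pi.basisFun F (Fin n)) = fun j i => H i j := by
    ext j i
    simp
  rw [colRank, Pi.spanSubset, Submodule.map_span, ← Set.image_comp, mulVec_basis]

theorem colRank_add_finrank_codeRestrict (X : Finset (Fin n)) :
    colRank H X + Module.finrank F (codeRestrict (codeOf H) X) = X.card := by
  rw [colRank_eq_finrank_map_spanSubset, codeRestrict_eq_spanSubset_inf, codeOf,
    finrank_map_add_finrank_inf_ker, Pi.dim_spanSubset, Set.ncard_coe_finset]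

theorem nulC_eq_finrank_codeRestrict (X : Finset (Fin n)) :
    nulC H X = Module.finrank F (codeRestrict (codeOf H) X) := by
  rw [nulC, ← colRank_add_finrank_codeRestrict H X, Nat.add_sub_cancel_left]

theorem rank_add_finrank_codeOf : H.rank + Module.finrank F (codeOf H) = n := by
  rw [Matrix.rank, codeOf, LinearMap.finrank_range_add_finrank_ker, Module.finrank_fin_fun]

end Nullity

section Greedy

variable {F : Type*} [Field F] {n : ℕ} {C D D' : Submodule F (Fin n → F)}

theorem finrank_codeRestrict_compl_singleton_add_one {p : Fin n} (hp : p ∈ suppD D) :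
    Module.finrank F (codeRestrict D {p}ᶜ) + 1 = Module.finrank F D := by
  let eval : (Fin n → F) →ₗ[F] F := LinearMap.proj p
  have shortened_eq : codeRestrict D {p}ᶜ = D ⊓ LinearMap.ker eval := by
    ext c
    simp [mem_codeRestrict, eval]
  have map_eval_eq_top : D.map eval = ⊤ := by
    obtain ⟨c, hcD, hcp⟩ := mem_suppD.mp hp
    refine (eq_bot_or_eq_top (D.map eval)).resolve_left fun h => hcp ?_
    exact (Submodule.eq_bot_iff _).mp h _ (Submodule.mem_map_of_mem hcD)
  rw [shortened_eq, ← finrank_map_add_finrank_inf_ker eval D, map_eval_eq_top, finrank_top,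
    Module.finrank_self, add_comm]

theorem wt_codeRestrict_compl_singleton_lt {p : Fin n} (hp : p ∈ suppD D) :
    wt (codeRestrict D {p}ᶜ) < wt D := by
  have not_mem_shortened : p ∉ suppD (codeRestrict D {p}ᶜ) := fun h => by
    simpa using suppD_codeRestrict_subset h
  exact Finset.card_lt_card <| (Finset.ssubset_iff_of_subset (suppD_mono codeRestrict_le)).mpr
    ⟨p, hp, not_mem_shortened⟩

theorem codeRestrict_suppD_eq_self_of_minimal (hD' : codeRestrict C (suppD D') = D')
    (hle : D ≤ D') (hcodim : Module.finrank F D' ≤ Module.finrank F D + 1)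
    (hmin : ∀ E ≤ D', Module.finrank F E = Module.finrank F D → wt D ≤ wt E) :
    codeRestrict C (suppD D) = D := by
  have closure_le : codeRestrict C (suppD D) ≤ D' :=
    (codeRestrict_mono (suppD_mono hle)).trans_eq hD'
  have le_closure : D ≤ codeRestrict C (suppD D) :=
    le_codeRestrict_suppD (hle.trans (hD'.ge.trans codeRestrict_le))
  by_contra hne
  have finrank_lt := Submodule.finrank_lt_finrank_of_lt (le_closure.lt_of_ne' hne)
  have closure_eq : codeRestrict C (suppD D) = D' :=
    Submodule.eq_of_le_of_finrank_le closure_le (by omega)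
  rw [closure_eq] at finrank_lt
  have wt_le : wt D' ≤ wt D := Finset.card_le_card (closure_eq ▸ suppD_codeRestrict_subset)
  have hbot : D' ≠ ⊥ := Submodule.one_le_finrank_iff.mp (by omega)
  obtain ⟨p, hp⟩ := suppD_nonempty hbot
  have finrank_shortened := finrank_codeRestrict_compl_singleton_add_one hp
  have wt_shortened := wt_codeRestrict_compl_singleton_lt hp
  have wt_min := hmin (codeRestrict D' {p}ᶜ) codeRestrict_le (by omega)
  omega

theorem finrank_of_mem_TDG {k j : ℕ} (hC : Module.finrank F C = k) (hD : D ∈ TDG C k j) :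
    Module.finrank F D = k - j := by
  cases j with
  | zero =>
    obtain rfl : D = C := hD
    exact hC
  | succ j => exact hD.2.1

theorem codeRestrict_suppD_of_mem_TDG {k j : ℕ} (hC : Module.finrank F C = k)
    (hD : D ∈ TDG C k j) : codeRestrict C (suppD D) = D := by
  induction j generalizing D with
  | zero =>
    obtain rfl : D = C := hD
    exact codeRestrict_suppD_self
  | succ j ih =>
    obtain ⟨⟨D', hD', hle⟩, hdim, hmin⟩ := hD
    have hdim' := finrank_of_mem_TDG hC hD'
    exact codeRestrict_suppD_eq_self_of_minimal (ih hD') hle (by omega) fun E hE hEdim =>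
      hmin E ⟨D', hD', hE⟩ (hEdim.trans hdim)

end Greedy

theorem statement9_general {F : Type*} [Field F] {m k n : ℕ} {H : Matrix (Fin m) (Fin n) F}
    (hk : Module.finrank F (codeOf H) = k) {i : ℕ} (hik : i ≤ k)
    {D : Submodule F (Fin n → F)} (hD : D ∈ TDG (codeOf H) k (k - i)) :
    nulC H (suppD D) = i := by
  rw [nulC_eq_finrank_codeRestrict, codeRestrict_suppD_of_mem_TDG hk hD, finrank_of_mem_TDG hk hD,
    Nat.sub_sub_self hik]

/-- if `D` is a top-down greedy `i`-subcode of an `[n,k]` code `C` (`1 ≤ i ≤ k`),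
then `n(Supp(D)) = i`, i.e. `Supp(D) ∈ 𝒩_i` for the matroid `M_C`. -/
theorem statement9 {F : Type*} [Field F] [Fintype F] {m k n : ℕ} (hmk : m + k = n)
    (H : Matrix (Fin m) (Fin n) F) (hH : H.rank = m)
    (i : ℕ) (hi1 : 1 ≤ i) (hik : i ≤ k)
    (D : Submodule F (Fin n → F)) (hD : D ∈ TDG (codeOf H) k (k - i)) :
    nulC H (suppD D) = i := by
  have hrank := rank_add_finrank_codeOf H
  exact statement9_general (by omega) hik hD

end
end
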